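/- (Existence and uniqueness for the ψ-Hilfer integrodifferential equation) Let 0 < α ≤ 1, 0 ≤ β ≤ 1, γ = α + β(1−α), ψ increasing C¹ on I = [a,b], L > 0, M ≥ 0, δ > 1, ξ = Lδ. Suppose f, k are continuous with ‖f(t,u,v)−f(t,ū,v̄)‖ ≤ M(‖u−ū‖+‖v−v̄‖), ‖k(t,s,u)−k(t,s,ū)‖ ≤ L‖u−ū‖, and d₂ = sup_{t∈I} ‖Ψ^γ(t,a)x₀ − I_{a+}^{α,ψ} f(·, 0, (1/Γ(α))∫_a^· ψ'(σ)(ψ(·)−ψ(σ))^{α−1} k(·,σ,0)dσ)(t)‖ / E_α(ξ(ψ(t)−ψ(a))^α) < ∞. If (M/ξ)(1 + 1/δ) < 1, then the ψ-Hilfer problem ^H𝔻_{a+}^{α,β,ψ} x(t) = f(t, x(t), (1/Γ(α))∫_a^t ψ'(s)(ψ(t)−ψ(s))^{α−1} k(t,s,x(s))ds), I_{a+}^{1−γ,ψ}x(a) = x₀, has a unique solution x in C_ξ(I, ℝⁿ), i.e., the equivalent integral equation x(t) = Ψ^γ(t,a)x₀ + I_{a+}^{α,ψ} f(·, x(·),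 ...)(t) has a unique solution. -/

import Mathlib

open MeasureTheory Set

/-- One-parameter Mittag-Leffler function `E_α(z) = ∑ z^k / Γ(αk+1)`. -/
noncomputable def ML (α z : ℝ) : ℝ := ∑' k : ℕ, z ^ k / Real.Gamma (α * k + 1)

/-- ψ-Riemann–Liouville fractional integral of order μ (with `I^{0,ψ} = id`). -/
noncomputable def fracIntV {n : ℕ} (μ : ℝ) (ψ : ℝ → ℝ) (a : ℝ)
    (x : ℝ → EuclideanSpace ℝ (Fin n)) (t : ℝ) : EuclideanSpace ℝ (Fin n) :=
  if μ = 0 then x t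
  else (Real.Gamma μ)⁻¹ • ∫ s in a..t, (deriv ψ s * (ψ t - ψ s) ^ (μ - 1)) • x s

/-- The inner Volterra integral operator. -/
noncomputable def volterraK {n : ℕ} (α : ℝ) (ψ : ℝ → ℝ) (a : ℝ)
    (k : ℝ → ℝ → EuclideanSpace ℝ (Fin n) → EuclideanSpace ℝ (Fin n))
    (x : ℝ → EuclideanSpace ℝ (Fin n)) (t : ℝ) : EuclideanSpace ℝ (Fin n) :=
  (Real.Gamma α)⁻¹ • ∫ s in a..t, (deriv ψ s * (ψ t - ψ s) ^ (α - 1)) • k t s (x s)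


/-- A continuous left inverse of `ψ`. -/
theorem aux_inverse (a b : ℝ) (ψ : ℝ → ℝ)
    (hmono : StrictMonoOn ψ (Icc a b)) (hc : ContinuousOn ψ (Icc a b)) :
    ∃ φ : ℝ → ℝ, Continuous φ ∧ ∀ s ∈ Icc a b, φ (ψ s) = s := by
  have h1 : Continuous (fun s : Icc a b => ψ s) := continuousOn_iff_continuous_domRestrict.1 hc
  have h2 : Function.Injective (fun s : Icc a b => ψ s) := by
    intro s t h
    exact Subtype.ext (hmono.injOn s.2 t.2 h)
  obtain ⟨g, hg⟩ := ContinuousMap.exists_extension' (h1.isClosedEmbedding h2)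
    (⟨Subtype.val, continuous_subtype_val⟩ : C(Icc a b, ℝ))
  refine ⟨g, g.continuous, fun s hs => ?_⟩
  exact congrFun hg ⟨s, hs⟩

theorem aux_subst {E : Type*} [NormedAddCommGroup E] [NormedSpace ℝ E]
    (a b α : ℝ) (ψ φ : ℝ → ℝ)
    (hmono : StrictMonoOn ψ (Icc a b)) (hC1 : ContDiffOn ℝ 1 ψ (Icc a b))
    (hφ : ∀ s ∈ Icc a b, φ (ψ s) = s) (g : ℝ → E) (t : ℝ) (ht : t ∈ Icc a b) :
    ∫ s in a..t, (deriv ψ s * (ψ t - ψ s) ^ (α - 1)) • g s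
      = ∫ v in (0 : ℝ)..(ψ t - ψ a), v ^ (α - 1) • g (φ (ψ t - v)) := by
  have hc := hC1.continuousOn
  have hat := ht.1
  have hsub : Icc a t ⊆ Icc a b := Icc_subset_Icc_right ht.2
  have haI : a ∈ Icc a b := ⟨le_rfl, ht.1.trans ht.2⟩
  have hle : ψ a ≤ ψ t := hmono.monotoneOn haI ht hat
  have himg : ψ '' Ioo a t = Ioo (ψ a) (ψ t) := by
    ext y
    constructor
    · rintro ⟨s, hs, rfl⟩
      have hsI : s ∈ Icc a b := hsub ⟨hs.1.le, hs.2.le⟩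
      exact ⟨hmono haI hsI hs.1, hmono hsI ht hs.2⟩
    · intro hy
      obtain ⟨s, hs, rfl⟩ := (intermediate_value_Icc hat (hc.mono hsub)) ⟨hy.1.le, hy.2.le⟩
      refine ⟨s, ⟨lt_of_le_of_ne hs.1 ?_, lt_of_le_of_ne hs.2 ?_⟩, rfl⟩
      · rintro rfl; exact lt_irrefl _ hy.1
      · rintro rfl; exact lt_irrefl _ hy.2
  have hder : ∀ s ∈ Ioo a t, HasDerivAt ψ (deriv ψ s) s ∧ 0 ≤ deriv ψ s := by
    intro s hs
    have hn : Icc a b ∈ nhds s := Icc_mem_nhds hs.1 (hs.2.trans_le ht.2)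
    have hd : DifferentiableAt ℝ ψ s :=
      (hC1.differentiableOn one_ne_zero).differentiableAt hn
    refine ⟨hd.hasDerivAt, ?_⟩
    rw [← derivWithin_of_mem_nhds hn]
    exact hmono.monotoneOn.derivWithin_nonneg
  have key := integral_image_eq_integral_abs_deriv_smul (s := Ioo a t) (f := ψ) (f' := deriv ψ)
    measurableSet_Ioo (fun s hs => (hder s hs).1.hasDerivWithinAt)
    (hmono.injOn.mono (Ioo_subset_Icc_self.trans hsub))
    (fun y => (ψ t - y) ^ (α - 1) • g (φ y))
  have h3 := intervalIntegral.integral_comp_sub_left (a := ψ a) (b := ψ t)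
    (fun v => v ^ (α - 1) • g (φ (ψ t - v))) (ψ t)
  simp only [sub_self, sub_sub_cancel] at h3
  rw [← h3, intervalIntegral.integral_of_le hle, integral_Ioc_eq_integral_Ioo, ← himg, key,
    intervalIntegral.integral_of_le hat, integral_Ioc_eq_integral_Ioo]
  refine setIntegral_congr_fun measurableSet_Ioo fun s hs => ?_
  rw [abs_of_nonneg (hder s hs).2, hφ s (hsub ⟨hs.1.le, hs.2.le⟩), smul_smul]

theorem aux_param_cont {E X : Type*} [NormedAddCommGroup E] [NormedSpace ℝ E]
    [TopologicalSpace X] [CompactSpace X] [FirstCountableTopology X]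
    (α : ℝ) (hα : 0 < α) (τ : X → ℝ) (hτ : Continuous τ) (hτ0 : ∀ x, 0 ≤ τ x)
    (H : X → ℝ → E) (hH : Continuous (fun p : X × ℝ => H p.1 p.2)) :
    Continuous (fun x => ∫ v in (0 : ℝ)..(τ x), v ^ (α - 1) • H x v) := by
  have heq : ∀ x, ∫ v in (0 : ℝ)..(τ x), v ^ (α - 1) • H x v
      = (τ x ^ α) • ∫ u in (0 : ℝ)..1, u ^ (α - 1) • H x (τ x * u) := by
    intro x
    rcases (hτ0 x).eq_or_lt with h0 | h0
    · rw [← h0, Real.zero_rpow hα.ne']; simp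
    · have := intervalIntegral.smul_integral_comp_mul_left (a := 0) (b := 1)
        (fun v => v ^ (α - 1) • H x v) (τ x)
      rw [mul_zero, mul_one] at this
      rw [← this, ← intervalIntegral.integral_smul, ← intervalIntegral.integral_smul]
      refine intervalIntegral.integral_congr fun u hu => ?_
      rw [uIcc_of_le zero_le_one] at hu
      rw [Real.mul_rpow h0.le hu.1, smul_smul, smul_smul, ← mul_assoc]
      congr 2
      rw [Real.rpow_sub_one h0.ne']
      field_simp
  simp_rw [heq]
  refine (hτ.rpow_const fun x => Or.inr hα.le).smul ?_
  have hH2 : Continuous (fun p : X × ℝ => H p.1 (τ p.1 * p.2)) :=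
    hH.comp (continuous_fst.prodMk ((hτ.comp continuous_fst).mul continuous_snd))
  obtain ⟨C, hC⟩ := (isCompact_univ.prod (isCompact_Icc (a := (0:ℝ)) (b := 1))).exists_bound_of_continuousOn
    hH2.continuousOn
  have hint : IntervalIntegrable (fun u : ℝ => u ^ (α - 1)) volume 0 1 :=
    intervalIntegral.intervalIntegrable_rpow' (by linarith)
  refine intervalIntegral.continuous_of_dominated_interval
    (bound := fun u => u ^ (α - 1) * C) ?_ ?_ (hint.mul_const C) ?_
  · intro x
    have hx : Continuous (fun u : ℝ => H x (τ x * u)) := hH2.comp (by fun_prop : Continuous fun u : ℝ => (x, u))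
    exact (hint.smul_continuousOn hx.continuousOn).aestronglyMeasurable_restrict_uIoc
  · intro x
    refine Filter.Eventually.of_forall fun u hu => ?_
    rw [uIoc_of_le zero_le_one] at hu
    rw [norm_smul, Real.norm_of_nonneg (Real.rpow_nonneg hu.1.le _)]
    exact mul_le_mul_of_nonneg_left (hC (x, u) ⟨mem_univ _, hu.1.le, hu.2⟩) (Real.rpow_nonneg hu.1.le _)
  · refine Filter.Eventually.of_forall fun u _ => ?_
    have : Continuous (fun x => H x (τ x * u)) := hH2.comp (by fun_prop : Continuous fun x : X => (x, u))
    exact this.const_smul _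

theorem aux_kernel_bound (α lam τ : ℝ) (hα : 0 < α) (hlam : 0 < lam) (hτ : 0 ≤ τ) :
    ∫ v in (0 : ℝ)..τ, v ^ (α - 1) * Real.exp (-(lam * v)) ≤ lam ^ (-α) * Real.Gamma α := by
  have h := Real.integral_rpow_mul_exp_neg_mul_Ioi hα hlam
  rw [one_div, Real.inv_rpow hlam.le, ← Real.rpow_neg hlam.le] at h
  rw [← h, intervalIntegral.integral_of_le hτ]
  have hi := integrableOn_rpow_mul_exp_neg_mul_rpow (p := 1) (s := α - 1) (b := lam)
    (by linarith) one_pos hlam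
  simp only [Real.rpow_one, neg_mul] at hi
  refine setIntegral_mono_set hi ?_ (Ioc_subset_Ioi_self.eventuallyLE)
  filter_upwards [self_mem_ae_restrict measurableSet_Ioi] with v hv
  exact mul_nonneg (Real.rpow_nonneg (le_of_lt hv) _) (Real.exp_pos _).le

theorem aux_ML (α Z : ℝ) (hα : 0 < α) (hZ : 0 ≤ Z) :
    ∃ C : ℝ, ∀ z, 0 ≤ z → z ≤ Z → 0 < ML α z ∧ ML α z ≤ C := by
  obtain ⟨R, hR0, hR⟩ : ∃ R : ℝ, 0 < R ∧ R ^ α = 2 * (Z + 1) := by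
    refine ⟨(2 * (Z + 1)) ^ α⁻¹, by positivity, ?_⟩
    exact Real.rpow_inv_rpow (by positivity) hα.ne'
  have hG : ∀ k : ℕ, R ^ (α * k) * Real.exp (-R) ≤ Real.Gamma (α * k + 1) := by
    intro k
    have hk : 0 < α * k + 1 := by positivity
    have hi := Real.GammaIntegral_convergent hk
    rw [Real.Gamma_eq_integral hk, ← integral_exp_neg_Ioi, ← integral_const_mul]
    refine le_trans ?_ (setIntegral_mono_set (s := Ioi R) hi ?_ (Ioi_subset_Ioi hR0.le).eventuallyLE)
    · refine setIntegral_mono_on ((integrableOn_exp_neg_Ioi R).const_mul _)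
        (hi.mono_set (Ioi_subset_Ioi hR0.le)) measurableSet_Ioi fun v hv => ?_
      rw [mul_comm, add_sub_cancel_right]
      exact mul_le_mul_of_nonneg_left
        (Real.rpow_le_rpow hR0.le (le_of_lt hv) (by positivity)) (Real.exp_pos _).le
    · filter_upwards [self_mem_ae_restrict measurableSet_Ioi] with v hv
      exact mul_nonneg (Real.exp_pos _).le (Real.rpow_nonneg (le_of_lt hv) _)
  have hsg : Summable (fun k : ℕ => Real.exp R * (1 / 2 : ℝ) ^ k) :=
    (summable_geometric_of_lt_one (by norm_num) (by norm_num)).mul_left _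
  refine ⟨∑' k : ℕ, Real.exp R * (1 / 2 : ℝ) ^ k, fun z hz0 hzZ => ?_⟩
  have hnn : ∀ k : ℕ, 0 ≤ z ^ k / Real.Gamma (α * k + 1) := fun k =>
    div_nonneg (pow_nonneg hz0 k) (Real.Gamma_pos_of_pos (by positivity)).le
  have hle : ∀ k : ℕ, z ^ k / Real.Gamma (α * k + 1) ≤ Real.exp R * (1 / 2 : ℝ) ^ k := by
    intro k
    have hGp : 0 < Real.Gamma (α * k + 1) := Real.Gamma_pos_of_pos (by positivity)
    rw [div_le_iff₀ hGp]
    have h1 := hG k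
    rw [Real.rpow_mul hR0.le, hR, Real.rpow_natCast] at h1
    calc z ^ k ≤ (Z + 1) ^ k := pow_le_pow_left₀ hz0 (by linarith) k
      _ = Real.exp R * (1 / 2 : ℝ) ^ k * ((2 * (Z + 1)) ^ k * Real.exp (-R)) := by
          rw [mul_pow, Real.exp_neg]
          have := Real.exp_ne_zero R
          have h2 : ((1:ℝ) / 2) ^ k * 2 ^ k = 1 := by rw [← mul_pow]; norm_num
          field_simp
          simp
      _ ≤ _ := mul_le_mul_of_nonneg_left h1 (by positivity)
  have hs : Summable (fun k : ℕ => z ^ k / Real.Gamma (α * k + 1)) :=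
    Summable.of_nonneg_of_le hnn hle hsg
  refine ⟨?_, hs.tsum_le_tsum hle hsg⟩
  refine hs.tsum_pos hnn 0 ?_
  simp

theorem aux_fixed_point {E : Type*} [NormedAddCommGroup E] [CompleteSpace E] [NormedSpace ℝ E]
    (a b q : ℝ) (hab : a < b) (hq0 : 0 ≤ q) (hq : q < 1) (e : ℝ → ℝ)
    (he : ContinuousOn e (Icc a b)) (he0 : ∀ t ∈ Icc a b, 0 < e t)
    (Φ : (ℝ → E) → ℝ → E)
    (hΦ : ∀ x, ContinuousOn x (Icc a b) → ContinuousOn (Φ x) (Icc a b))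
    (hcon : ∀ x y D, ContinuousOn x (Icc a b) → ContinuousOn y (Icc a b) → 0 ≤ D →
      (∀ t ∈ Icc a b, ‖x t - y t‖ ≤ D * e t) →
      ∀ t ∈ Icc a b, ‖Φ x t - Φ y t‖ ≤ q * D * e t) :
    ∃ x : ℝ → E, (ContinuousOn x (Icc a b) ∧ ∀ t ∈ Icc a b, x t = Φ x t) ∧
      ∀ y : ℝ → E, (ContinuousOn y (Icc a b) ∧ ∀ t ∈ Icc a b, y t = Φ y t) →
        ∀ t ∈ Icc a b, y t = x t := by
  have her : Continuous (fun t : Icc a b => e t) := continuousOn_iff_continuous_domRestrict.1 he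
  let X : C(Icc a b, E) → ℝ → E := fun z => IccExtend hab.le (fun t : Icc a b => e t • z t)
  have hX : ∀ z, Continuous (X z) := fun z => (her.smul z.continuous).Icc_extend'
  have hXv : ∀ z (t : Icc a b), X z t = e t • z t := fun z t => IccExtend_val _ _ _
  have hTc : ∀ z, Continuous (fun t : Icc a b => (e t)⁻¹ • Φ (X z) t) := fun z =>
    (her.inv₀ fun t => (he0 t t.2).ne').smul
      (continuousOn_iff_continuous_domRestrict.1 (hΦ _ (hX z).continuousOn))
  let T : C(Icc a b, E) → C(Icc a b, E) := fun z => ⟨_, hTc z⟩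
  have hT : ContractingWith ⟨q, hq0⟩ T := by
    refine ⟨by exact_mod_cast hq, LipschitzWith.of_dist_le_mul fun z w => ?_⟩
    rw [ContinuousMap.dist_le (by positivity)]
    intro t
    have het := he0 t t.2
    have h1 := hcon (X z) (X w) (dist z w) (hX z).continuousOn (hX w).continuousOn dist_nonneg
      (by
        intro s hs
        have h2 := hXv z ⟨s, hs⟩
        have h3 := hXv w ⟨s, hs⟩
        simp only at h2 h3
        rw [h2, h3, ← smul_sub, norm_smul, Real.norm_of_nonneg (he0 s hs).le, mul_comm]
        refine mul_le_mul_of_nonneg_right ?_ (he0 s hs).le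
        rw [← dist_eq_norm]
        exact ContinuousMap.dist_apply_le_dist _) t t.2
    change dist ((e t)⁻¹ • Φ (X z) t) ((e t)⁻¹ • Φ (X w) t) ≤ q * dist z w
    rw [dist_eq_norm, ← smul_sub, norm_smul, norm_inv, Real.norm_of_nonneg het.le,
      inv_mul_le_iff₀ het]
    linarith
  obtain ⟨z, hz, -⟩ := hT.exists_fixedPoint 0 (edist_ne_top _ _)
  have hxeq : ∀ t ∈ Icc a b, X z t = Φ (X z) t := by
    intro t ht
    have h1 : (e t)⁻¹ • Φ (X z) t = z ⟨t, ht⟩ := congrArg (fun w : C(Icc a b, E) => w ⟨t, ht⟩) hz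
    have h2 := hXv z ⟨t, ht⟩
    simp only at h2
    rw [h2, ← h1, smul_inv_smul₀ (he0 t ht).ne']
  refine ⟨X z, ⟨(hX z).continuousOn, hxeq⟩, ?_⟩
  rintro y ⟨hyc, hy⟩
  have hdc : ContinuousOn (fun t => ‖y t - X z t‖ / e t) (Icc a b) :=
    (hyc.sub (hX z).continuousOn).norm.div he fun t ht => (he0 t ht).ne'
  obtain ⟨t₀, ht₀, hmax⟩ := isCompact_Icc.exists_isMaxOn (nonempty_Icc.2 hab.le) hdc
  set D := ‖y t₀ - X z t₀‖ / e t₀ with hD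
  have hD0 : 0 ≤ D := div_nonneg (norm_nonneg _) (he0 _ ht₀).le
  have hb : ∀ t ∈ Icc a b, ‖y t - X z t‖ ≤ D * e t := fun t ht =>
    (div_le_iff₀ (he0 t ht)).1 (hmax ht)
  have h1 := hcon y (X z) D hyc (hX z).continuousOn hD0 hb t₀ ht₀
  rw [← hy t₀ ht₀, ← hxeq t₀ ht₀, ← div_le_iff₀ (he0 t₀ ht₀), ← hD] at h1
  have hDz : D = 0 := by nlinarith
  intro t ht
  have := hb t ht
  rw [hDz, zero_mul] at this
  exact sub_eq_zero.1 (norm_le_zero_iff.1 this)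

theorem aux_frac_eq {n : ℕ} (α : ℝ) (hα : 0 < α) (ψ : ℝ → ℝ) (a : ℝ)
    (x : ℝ → EuclideanSpace ℝ (Fin n)) (t : ℝ) :
    fracIntV α ψ a x t
      = (Real.Gamma α)⁻¹ • ∫ s in a..t, (deriv ψ s * (ψ t - ψ s) ^ (α - 1)) • x s := by
  rw [fracIntV, if_neg hα.ne']

theorem aux_volterra_eq {n : ℕ} (α : ℝ) (hα : 0 < α) (ψ : ℝ → ℝ) (a : ℝ)
    (k : ℝ → ℝ → EuclideanSpace ℝ (Fin n) → EuclideanSpace ℝ (Fin n))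
    (x : ℝ → EuclideanSpace ℝ (Fin n)) (t : ℝ) :
    volterraK α ψ a k x t = fracIntV α ψ a (fun s => k t s (x s)) t := by
  rw [aux_frac_eq α hα, volterraK]

theorem aux_frac_congr {n : ℕ} (α : ℝ) (hα : 0 < α) (ψ : ℝ → ℝ) (a t : ℝ) (hat : a ≤ t)
    (x y : ℝ → EuclideanSpace ℝ (Fin n)) (h : ∀ s ∈ Icc a t, x s = y s) :
    fracIntV α ψ a x t = fracIntV α ψ a y t := by
  rw [aux_frac_eq α hα, aux_frac_eq α hα]
  congr 1
  refine intervalIntegral.integral_congr fun s hs => ?_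
  rw [uIcc_of_le hat] at hs
  simp only [h s hs]

theorem aux_frac_cont {n : ℕ} (a b α : ℝ) (hα : 0 < α) (ψ : ℝ → ℝ)
    (hmono : StrictMonoOn ψ (Icc a b)) (hC1 : ContDiffOn ℝ 1 ψ (Icc a b))
    (g : ℝ → ℝ → EuclideanSpace ℝ (Fin n)) (hg : Continuous fun p : ℝ × ℝ => g p.1 p.2) :
    ContinuousOn (fun t => fracIntV α ψ a (g t) t) (Icc a b) := by
  obtain ⟨φ, hφc, hφ⟩ := aux_inverse a b ψ hmono hC1.continuousOn
  have hψ : Continuous (fun s : Icc a b => ψ s) :=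
    continuousOn_iff_continuous_domRestrict.1 hC1.continuousOn
  rw [continuousOn_iff_continuous_domRestrict]
  have heq : (Icc a b).domRestrict (fun t => fracIntV α ψ a (g t) t) = fun t : Icc a b =>
      (Real.Gamma α)⁻¹ • ∫ v in (0 : ℝ)..(ψ t - ψ a), v ^ (α - 1) • g t (φ (ψ t - v)) := by
    funext t
    rw [← aux_subst a b α ψ φ hmono hC1 hφ (g t) t t.2, ← aux_frac_eq α hα]
    rfl
  rw [heq]
  suffices hs : Continuous (fun t : Icc a b =>
      ∫ v in (0 : ℝ)..(ψ t - ψ a), v ^ (α - 1) • g t (φ (ψ t - v))) from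
    (continuous_const_smul (Real.Gamma α)⁻¹).comp hs
  refine aux_param_cont α hα (fun t : Icc a b => ψ t - ψ a) (hψ.sub continuous_const)
    (fun t => ?_) (fun t v => g t (φ (ψ t - v))) ?_
  · exact sub_nonneg.2 (hmono.monotoneOn ⟨le_rfl, t.2.1.trans t.2.2⟩ t.2 t.2.1)
  · have h1 : Continuous (fun p : Icc a b × ℝ => φ (ψ p.1 - p.2)) :=
      hφc.comp ((hψ.comp continuous_fst).sub continuous_snd)
    exact hg.comp ((continuous_subtype_val.comp continuous_fst).prodMk h1)

theorem aux_frac_bound {n : ℕ} (a b α lam D : ℝ) (hα : 0 < α) (hlam : 0 < lam)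
    (ψ : ℝ → ℝ) (hmono : StrictMonoOn ψ (Icc a b)) (hC1 : ContDiffOn ℝ 1 ψ (Icc a b))
    (g h : ℝ → EuclideanSpace ℝ (Fin n)) (hg : ContinuousOn g (Icc a b))
    (hh : ContinuousOn h (Icc a b)) (t : ℝ) (ht : t ∈ Icc a b)
    (hD : ∀ s ∈ Icc a b, ‖g s - h s‖ ≤ D * Real.exp (lam * (ψ s - ψ a))) :
    ‖fracIntV α ψ a g t - fracIntV α ψ a h t‖
      ≤ lam ^ (-α) * D * Real.exp (lam * (ψ t - ψ a)) := by
  obtain ⟨φ, hφc, hφ⟩ := aux_inverse a b ψ hmono hC1.continuousOn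
  have haI : a ∈ Icc a b := ⟨le_rfl, ht.1.trans ht.2⟩
  have hD0 : 0 ≤ D := by
    have := (norm_nonneg _).trans (hD a haI)
    simpa using this
  have hΓ : 0 < Real.Gamma α := Real.Gamma_pos_of_pos hα
  have hτ : 0 ≤ ψ t - ψ a := sub_nonneg.2 (hmono.monotoneOn haI ht ht.1)
  have hsurj : ∀ v ∈ Icc 0 (ψ t - ψ a), ∃ s ∈ Icc a b, ψ s = ψ t - v := by
    intro v hv
    obtain ⟨s, hs, hs'⟩ := (intermediate_value_Icc ht.1
      (hC1.continuousOn.mono (Icc_subset_Icc_right ht.2)))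
      (show ψ t - v ∈ Icc (ψ a) (ψ t) from ⟨by linarith [hv.2], by linarith [hv.1]⟩)
    exact ⟨s, Icc_subset_Icc_right ht.2 hs, hs'⟩
  have hmaps : MapsTo (fun v => φ (ψ t - v)) (uIcc 0 (ψ t - ψ a)) (Icc a b) := by
    intro v hv
    rw [uIcc_of_le hτ] at hv
    obtain ⟨s, hs, hs'⟩ := hsurj v hv
    simp only
    rw [← hs', hφ s hs]
    exact hs
  have hcφ : Continuous (fun v => φ (ψ t - v)) := hφc.comp (continuous_const.sub continuous_id)
  have hint : IntervalIntegrable (fun v : ℝ => v ^ (α - 1)) volume 0 (ψ t - ψ a) :=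
    intervalIntegral.intervalIntegrable_rpow' (by linarith)
  have hig : IntervalIntegrable (fun v : ℝ => v ^ (α - 1) • g (φ (ψ t - v))) volume
      0 (ψ t - ψ a) := hint.smul_continuousOn (hg.comp hcφ.continuousOn hmaps)
  have hih : IntervalIntegrable (fun v : ℝ => v ^ (α - 1) • h (φ (ψ t - v))) volume
      0 (ψ t - ψ a) := hint.smul_continuousOn (hh.comp hcφ.continuousOn hmaps)
  rw [aux_frac_eq α hα, aux_frac_eq α hα, aux_subst a b α ψ φ hmono hC1 hφ g t ht,
    aux_subst a b α ψ φ hmono hC1 hφ h t ht, ← smul_sub, ← intervalIntegral.integral_sub hig hih,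
    norm_smul, norm_inv, Real.norm_of_nonneg hΓ.le, inv_mul_le_iff₀ hΓ]
  have hce : Continuous (fun v : ℝ => Real.exp (-(lam * v))) := by fun_prop
  have hint2 := hint.mul_continuousOn (hce.continuousOn (s := uIcc 0 (ψ t - ψ a)))
  have h1 := intervalIntegral.norm_integral_le_of_norm_le (μ := volume) hτ
    (f := fun v => v ^ (α - 1) • g (φ (ψ t - v)) - v ^ (α - 1) • h (φ (ψ t - v)))
    (g := fun v => (D * Real.exp (lam * (ψ t - ψ a))) * (v ^ (α - 1) * Real.exp (-(lam * v))))
    (Filter.Eventually.of_forall fun v hv => by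
      obtain ⟨s, hs, hs'⟩ := hsurj v ⟨hv.1.le, hv.2⟩
      have h2 := hD s hs
      have hv0 : 0 ≤ v ^ (α - 1) := Real.rpow_nonneg hv.1.le _
      rw [← smul_sub, norm_smul, Real.norm_of_nonneg hv0, ← hs', hφ s hs]
      calc v ^ (α - 1) * ‖g s - h s‖
          ≤ v ^ (α - 1) * (D * Real.exp (lam * (ψ s - ψ a))) :=
            mul_le_mul_of_nonneg_left h2 hv0
        _ = _ := by
            rw [hs', show lam * (ψ t - v - ψ a) = lam * (ψ t - ψ a) + -(lam * v) by ring,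
              Real.exp_add]
            ring)
    (hint2.const_mul _)
  refine h1.trans ?_
  rw [intervalIntegral.integral_const_mul]
  calc _ ≤ D * Real.exp (lam * (ψ t - ψ a)) * (lam ^ (-α) * Real.Gamma α) :=
        mul_le_mul_of_nonneg_left (aux_kernel_bound α lam _ hα hlam hτ) (by positivity)
    _ = _ := by ring

theorem aux_ext {n : ℕ} (a b : ℝ) (hab : a < b) (x : ℝ → EuclideanSpace ℝ (Fin n))
    (hx : ContinuousOn x (Icc a b)) :
    ∃ y : ℝ → EuclideanSpace ℝ (Fin n), Continuous y ∧ ∀ t ∈ Icc a b, x t = y t := by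
  refine ⟨IccExtend hab.le ((Icc a b).domRestrict x),
    (continuousOn_iff_continuous_domRestrict.1 hx).Icc_extend', fun t ht => ?_⟩
  rw [IccExtend_of_mem _ _ ht]
  rfl

theorem aux_volterra_cont {n : ℕ} (a b α : ℝ) (hab : a < b) (hα : 0 < α) (ψ : ℝ → ℝ)
    (hmono : StrictMonoOn ψ (Icc a b)) (hC1 : ContDiffOn ℝ 1 ψ (Icc a b))
    (k : ℝ → ℝ → EuclideanSpace ℝ (Fin n) → EuclideanSpace ℝ (Fin n))
    (hk : Continuous fun p : ℝ × ℝ × EuclideanSpace ℝ (Fin n) => k p.1 p.2.1 p.2.2)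
    (x : ℝ → EuclideanSpace ℝ (Fin n)) (hx : ContinuousOn x (Icc a b)) :
    ContinuousOn (volterraK α ψ a k x) (Icc a b) := by
  obtain ⟨y, hy, hxy⟩ := aux_ext a b hab x hx
  have h1 := aux_frac_cont a b α hα ψ hmono hC1 (fun t s => k t s (y s))
    (hk.comp (continuous_fst.prodMk (continuous_snd.prodMk (hy.comp continuous_snd))))
  refine h1.congr fun t ht => ?_
  rw [aux_volterra_eq α hα]
  refine aux_frac_congr α hα ψ a t ht.1 _ _ fun s hs => ?_
  rw [hxy s ⟨hs.1, hs.2.trans ht.2⟩]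

theorem aux_frac_cont' {n : ℕ} (a b α : ℝ) (hab : a < b) (hα : 0 < α) (ψ : ℝ → ℝ)
    (hmono : StrictMonoOn ψ (Icc a b)) (hC1 : ContDiffOn ℝ 1 ψ (Icc a b))
    (g : ℝ → EuclideanSpace ℝ (Fin n)) (hg : ContinuousOn g (Icc a b)) :
    ContinuousOn (fracIntV α ψ a g) (Icc a b) := by
  obtain ⟨y, hy, hxy⟩ := aux_ext a b hab g hg
  refine (aux_frac_cont a b α hα ψ hmono hC1 (fun _ => y) (hy.comp continuous_snd)).congr
    fun t ht => ?_
  exact aux_frac_congr α hα ψ a t ht.1 _ _ fun s hs => hxy s ⟨hs.1, hs.2.trans ht.2⟩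

theorem hilfer_integrodifferential_existence_uniqueness
    (n : ℕ) (a b α β γ L M δ ξ : ℝ) (ψ : ℝ → ℝ)
    (f : ℝ → EuclideanSpace ℝ (Fin n) → EuclideanSpace ℝ (Fin n) → EuclideanSpace ℝ (Fin n))
    (k : ℝ → ℝ → EuclideanSpace ℝ (Fin n) → EuclideanSpace ℝ (Fin n))
    (x₀ : EuclideanSpace ℝ (Fin n))
    (hα0 : 0 < α) (hα1 : α ≤ 1) (hβ0 : 0 ≤ β) (hβ1 : β ≤ 1)
    (hγ : γ = α + β * (1 - α)) (hab : a < b)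
    (hmono : StrictMonoOn ψ (Icc a b)) (hC1 : ContDiffOn ℝ 1 ψ (Icc a b))
    (hL : 0 < L) (hM : 0 ≤ M) (hδ : 1 < δ) (hξ : ξ = L * δ)
    (hf : Continuous fun p : ℝ × EuclideanSpace ℝ (Fin n) × EuclideanSpace ℝ (Fin n) =>
      f p.1 p.2.1 p.2.2)
    (hk : Continuous fun p : ℝ × ℝ × EuclideanSpace ℝ (Fin n) => k p.1 p.2.1 p.2.2)
    (hfLip : ∀ t u v u' v', ‖f t u v - f t u' v'‖ ≤ M * (‖u - u'‖ + ‖v - v'‖))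
    (hkLip : ∀ t s u u', ‖k t s u - k t s u'‖ ≤ L * ‖u - u'‖)
    (hd2 : BddAbove ((fun t =>
      ‖((ψ t - ψ a) ^ (γ - 1) / Real.Gamma γ) • x₀
        - fracIntV α ψ a (fun s => f s 0 (volterraK α ψ a k (fun _ => 0) s)) t‖
        / ML α (ξ * (ψ t - ψ a) ^ α)) '' Icc a b))
    (hcontr : M / ξ * (1 + 1 / δ) < 1) :
    ∃ x : ℝ → EuclideanSpace ℝ (Fin n),
      (ContinuousOn x (Icc a b) ∧
        ∀ t ∈ Ioc a b,
          x t = ((ψ t - ψ a) ^ (γ - 1) / Real.Gamma γ) • x₀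
            + fracIntV α ψ a (fun s => f s (x s) (volterraK α ψ a k x s)) t) ∧
      ∀ y : ℝ → EuclideanSpace ℝ (Fin n),
        (ContinuousOn y (Icc a b) ∧
          ∀ t ∈ Ioc a b,
            y t = ((ψ t - ψ a) ^ (γ - 1) / Real.Gamma γ) • x₀
              + fracIntV α ψ a (fun s => f s (y s) (volterraK α ψ a k y s)) t) →
        ∀ t ∈ Ioc a b, y t = x t := by
  have hcomp : ∀ x : ℝ → EuclideanSpace ℝ (Fin n), ContinuousOn x (Icc a b) →
      ContinuousOn (fun s => f s (x s) (volterraK α ψ a k x s)) (Icc a b) := fun x hx =>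
    hf.comp_continuousOn (continuousOn_id.prodMk
      (hx.prodMk (aux_volterra_cont a b α hab hα0 ψ hmono hC1 k hk x hx)))
  have hξ0 : 0 < ξ := by rw [hξ]; positivity
  have haI : a ∈ Icc a b := ⟨le_rfl, hab.le⟩
  have hbI : b ∈ Icc a b := ⟨hab.le, le_rfl⟩
  have hγ0 : 0 < γ := by
    rw [hγ]
    have := mul_nonneg hβ0 (sub_nonneg.2 hα1)
    linarith
  have hγ1 : γ ≤ 1 := by
    rw [hγ]
    nlinarith
  have hcase : γ = 1 ∨ x₀ = 0 := by
    by_contra! hne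
    have hγlt : γ < 1 := lt_of_le_of_ne hγ1 hne.1
    have hx0 : 0 < ‖x₀‖ := norm_pos_iff.2 hne.2
    have hΓ : 0 < Real.Gamma γ := Real.Gamma_pos_of_pos hγ0
    obtain ⟨B, hB⟩ := hd2
    obtain ⟨C, hC⟩ := aux_ML α (ξ * (ψ b - ψ a) ^ α) hα0
      (mul_nonneg hξ0.le (Real.rpow_nonneg (sub_nonneg.2 (hmono haI hbI hab).le) _))
    obtain ⟨N, hN⟩ := isCompact_Icc.exists_bound_of_continuousOn
      (aux_frac_cont' a b α hab hα0 ψ hmono hC1 _ (hcomp (fun _ => 0) continuousOn_const))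
    have hbd : ∀ t ∈ Icc a b, (ψ t - ψ a) ^ (γ - 1) ≤ (|B| * C + N) * Real.Gamma γ / ‖x₀‖ := by
      intro t ht
      have hta : 0 ≤ ψ t - ψ a := sub_nonneg.2 (hmono.monotoneOn haI ht ht.1)
      have htb : ψ t - ψ a ≤ ψ b - ψ a := sub_le_sub_right (hmono.monotoneOn ht hbI ht.2) _
      have h1 := hB (mem_image_of_mem _ ht)
      obtain ⟨hp, hle⟩ := hC (ξ * (ψ t - ψ a) ^ α)
        (mul_nonneg hξ0.le (Real.rpow_nonneg hta _))
        (mul_le_mul_of_nonneg_left (Real.rpow_le_rpow hta htb hα0.le) hξ0.le)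
      rw [div_le_iff₀ hp] at h1
      have h2 := hN t ht
      have h3 : B * ML α (ξ * (ψ t - ψ a) ^ α) ≤ |B| * C :=
        (mul_le_mul_of_nonneg_right (le_abs_self B) hp.le).trans
          (mul_le_mul_of_nonneg_left hle (abs_nonneg B))
      have h4 : ‖((ψ t - ψ a) ^ (γ - 1) / Real.Gamma γ) • x₀‖ ≤ |B| * C + N := by
        have h5 := norm_sub_norm_le (((ψ t - ψ a) ^ (γ - 1) / Real.Gamma γ) • x₀)
          (fracIntV α ψ a (fun s => f s 0 (volterraK α ψ a k (fun _ => 0) s)) t)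
        linarith
      rw [norm_smul, Real.norm_of_nonneg (div_nonneg (Real.rpow_nonneg hta _) hΓ.le)] at h4
      rw [le_div_iff₀ hx0]
      have h6 := mul_le_mul_of_nonneg_right h4 hΓ.le
      calc _ = (ψ t - ψ a) ^ (γ - 1) / Real.Gamma γ * ‖x₀‖ * Real.Gamma γ := by
            field_simp
        _ ≤ _ := h6
    have htend := tendsto_rpow_neg_nhdsGT_zero (y := γ - 1) (by linarith)
    have hev := htend.eventually_gt_atTop ((|B| * C + N) * Real.Gamma γ / ‖x₀‖)
    have hev2 : ∀ᶠ y in nhdsWithin (0 : ℝ) (Ioi 0), y ∈ Ioc 0 (ψ b - ψ a) :=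
      Ioc_mem_nhdsGT (sub_pos.2 (hmono haI hbI hab))
    obtain ⟨y, hy1, hy2⟩ := (hev.and hev2).exists
    obtain ⟨t, ht, hty⟩ := (intermediate_value_Icc hab.le hC1.continuousOn)
      (show ψ a + y ∈ Icc (ψ a) (ψ b) from ⟨by linarith [hy2.1], by linarith [hy2.2]⟩)
    have := hbd t ht
    rw [hty, add_sub_cancel_left] at this
    linarith
  have hconst : ∀ t, ((ψ t - ψ a) ^ (γ - 1) / Real.Gamma γ) • x₀ = x₀ := by
    intro t
    rcases hcase with h | h
    · rw [h]; simp
    · rw [h]; simp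
  simp only [hconst]
  obtain ⟨lam, hlam, hq⟩ : ∃ lam : ℝ, 0 < lam ∧ lam ^ (-α) * (M * (1 + L * lam ^ (-α))) < 1 := by
    have h1 := tendsto_rpow_neg_atTop hα0
    have h2 : Filter.Tendsto (fun lam : ℝ => lam ^ (-α) * (M * (1 + L * lam ^ (-α))))
        Filter.atTop (nhds (0 * (M * (1 + L * 0)))) :=
      h1.mul (((h1.const_mul L).const_add 1).const_mul M)
    rw [zero_mul] at h2
    obtain ⟨l, hl1, hl2⟩ := ((Filter.eventually_gt_atTop 0).and
      (h2.eventually_lt_const one_pos)).exists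
    exact ⟨l, hl1, hl2⟩
  have hlp : 0 < lam ^ (-α) := Real.rpow_pos_of_pos hlam _
  have hΦc : ∀ x : ℝ → EuclideanSpace ℝ (Fin n), ContinuousOn x (Icc a b) →
      ContinuousOn (fun t => x₀ + fracIntV α ψ a
        (fun s => f s (x s) (volterraK α ψ a k x s)) t) (Icc a b) := fun x hx =>
    continuousOn_const.add (aux_frac_cont' a b α hab hα0 ψ hmono hC1 _ (hcomp x hx))
  obtain ⟨x, ⟨hxc, hx⟩, huniq⟩ := aux_fixed_point a b
    (lam ^ (-α) * (M * (1 + L * lam ^ (-α)))) hab (by positivity) hq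
    (fun t => Real.exp (lam * (ψ t - ψ a)))
    (Real.continuous_exp.comp_continuousOn
      (continuousOn_const.mul (hC1.continuousOn.sub continuousOn_const)))
    (fun t _ => Real.exp_pos _)
    (fun (x : ℝ → EuclideanSpace ℝ (Fin n)) t => x₀ + fracIntV α ψ a
      (fun s => f s (x s) (volterraK α ψ a k x s)) t) hΦc (by
    intro x y D hx hy hD hxy t ht
    rw [add_sub_add_left_eq_sub, mul_assoc (lam ^ (-α))]
    refine aux_frac_bound a b α lam _ hα0 hlam ψ hmono hC1 _ _ (hcomp x hx) (hcomp y hy) t ht ?_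
    intro s hs
    have hkc : ∀ z : ℝ → EuclideanSpace ℝ (Fin n), ContinuousOn z (Icc a b) →
        ContinuousOn (fun r => k s r (z r)) (Icc a b) := fun z hz =>
      hk.comp_continuousOn (continuousOn_const.prodMk (continuousOn_id.prodMk hz))
    have h1 := aux_frac_bound a b α lam (L * D) hα0 hlam ψ hmono hC1 _ _ (hkc x hx) (hkc y hy)
      s hs (fun r hr => by
        refine (hkLip _ _ _ _).trans ?_
        rw [mul_assoc]
        exact mul_le_mul_of_nonneg_left (hxy r hr) hL.le)
    rw [← aux_volterra_eq α hα0, ← aux_volterra_eq α hα0] at h1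
    have h2 := hxy s hs
    calc _ ≤ M * (‖x s - y s‖ + ‖volterraK α ψ a k x s - volterraK α ψ a k y s‖) :=
          hfLip _ _ _ _ _
      _ ≤ M * (D * Real.exp (lam * (ψ s - ψ a))
            + lam ^ (-α) * (L * D) * Real.exp (lam * (ψ s - ψ a))) :=
          mul_le_mul_of_nonneg_left (add_le_add h2 h1) hM
      _ = _ := by ring)
  refine ⟨x, ⟨hxc, fun t ht => hx t (Ioc_subset_Icc_self ht)⟩, ?_⟩
  rintro y ⟨hyc, hy⟩ t ht
  refine huniq y ⟨hyc, ?_⟩ t (Ioc_subset_Icc_self ht)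
  have hEq : EqOn y (fun t => x₀ + fracIntV α ψ a
      (fun s => f s (y s) (volterraK α ψ a k y s)) t) (Ioc a b) := hy
  exact hEq.of_subset_closure hyc (hΦc y hyc) Ioc_subset_Icc_self
    (by rw [closure_Ioc hab.ne])
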